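/- Let μ be a Borel probability measure on ℝ^d with por(μ) > 0. Then μ is singular with respect to d-dimensional Lebesgue measure. -/

import Mathlib

open MeasureTheory Filter Metric Set
open scoped Classical

/-- `por(μ,x,r,ε)`: the supremum of `α ≥ 0` such that some ball `B(y,αr) ⊆ B(x,r)` has
`μ(B(y,αr)) ≤ ε·μ(B(x,r))` (an "ε-hole" of relative size `α`). -/
noncomputable def porMeas {X : Type*} [MetricSpace X] [MeasurableSpace X]
    (μ : Measure X) (x : X) (r ε : ℝ) : ℝ :=
  sSup {α : ℝ | 0 ≤ α ∧ ∃ y, Metric.ball y (α * r) ⊆ Metric.ball x r ∧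
    μ (Metric.ball y (α * r)) ≤ ENNReal.ofReal ε * μ (Metric.ball x r)}

/-- `por(μ,x,ε) = liminf_{r→0} por(μ,x,r,ε)`. -/
noncomputable def porMeasPt {X : Type*} [MetricSpace X] [MeasurableSpace X]
    (μ : Measure X) (x : X) (ε : ℝ) : ℝ :=
  Filter.liminf (fun r : ℝ => porMeas μ x r ε) (nhdsWithin 0 (Set.Ioi 0))

/-- `por(μ,ε)`: the `μ`-essential infimum of `x ↦ por(μ,x,ε)`. -/
noncomputable def porMeasEps {X : Type*} [MetricSpace X] [MeasurableSpace X]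
    (μ : Measure X) (ε : ℝ) : ℝ :=
  essInf (fun x => porMeasPt μ x ε) μ

/-- `por(μ) = lim_{ε→0⁺} por(μ,ε)`; since `ε ↦ por(μ,ε)` is nondecreasing, this limit is
the infimum of `por(μ,ε)` over `ε > 0`. -/
noncomputable def porMeasure {X : Type*} [MetricSpace X] [MeasurableSpace X]
    (μ : Measure X) : ℝ :=
  sInf ((fun ε => porMeasEps μ ε) '' Set.Ioi 0)

theorem exists_lt_of_lt_sSup_real {S : Set ℝ} {a : ℝ} (ha : 0 ≤ a) (h : a < sSup S) :
    ∃ b ∈ S, a < b := by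
  have hne : S.Nonempty := by
    by_contra hS
    rw [Set.not_nonempty_iff_eq_empty] at hS
    rw [hS, Real.sSup_empty] at h
    linarith
  exact exists_lt_of_lt_csSup hne h

theorem hole_of_pos {X : Type*} [MetricSpace X] [MeasurableSpace X] (μ : Measure X)
    (hpor : 0 < porMeasure μ) :
    ∃ c : ℝ, 0 < c ∧ ∀ ε : ℝ, 0 < ε → ∀ᵐ x ∂μ, ∀ᶠ r in nhdsWithin (0 : ℝ) (Set.Ioi 0),
      ∃ y, ∃ α, c < α ∧ Metric.ball y (α * r) ⊆ Metric.ball x r ∧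
        μ (Metric.ball y (α * r)) ≤ ENNReal.ofReal ε * μ (Metric.ball x r) := by
  refine ⟨porMeasure μ / 2, by positivity, fun ε hε => ?_⟩
  set c := porMeasure μ / 2 with hc
  have hc0 : 0 ≤ c := by positivity
  have hbdd : BddBelow ((fun ε => porMeasEps μ ε) '' Set.Ioi 0) := by
    by_contra h
    have := Real.sInf_of_not_bddBelow h
    unfold porMeasure at hpor
    linarith
  have h1 : porMeasure μ ≤ porMeasEps μ ε := csInf_le hbdd ⟨ε, hε, rfl⟩
  have h2 : c < porMeasEps μ ε := by linarith
  unfold porMeasEps essInf at h2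
  rw [Filter.liminf_eq] at h2
  obtain ⟨b, hb, hcb⟩ := exists_lt_of_lt_sSup_real hc0 h2
  filter_upwards [show ∀ᵐ x ∂μ, b ≤ porMeasPt μ x ε from hb] with x hx
  have h3 : c < porMeasPt μ x ε := hcb.trans_le hx
  unfold porMeasPt at h3
  rw [Filter.liminf_eq] at h3
  obtain ⟨b', hb', hcb'⟩ := exists_lt_of_lt_sSup_real hc0 h3
  filter_upwards [show ∀ᶠ r in nhdsWithin (0 : ℝ) (Set.Ioi 0), b' ≤ porMeas μ x r ε from hb']
    with r hr
  obtain ⟨α, ⟨_, y, hy⟩, hα⟩ := exists_lt_of_lt_sSup_real hc0 (hcb'.trans_le hr)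
  exact ⟨y, α, hα, hy⟩

/-- A Borel probability measure on `ℝ^d` with positive porosity is
singular with respect to Lebesgue measure. -/
theorem stmt13 (d : ℕ) (hd : 0 < d) (μ : Measure (EuclideanSpace ℝ (Fin d)))
    [IsProbabilityMeasure μ] (hpor : 0 < porMeasure μ) :
    μ ⟂ₘ (volume : Measure (EuclideanSpace ℝ (Fin d))) := by
  obtain ⟨c, hc, H⟩ := hole_of_pos μ hpor
  have hcd : 0 < (c / 2) ^ d := by positivity
  have H1 := H ((c / 2) ^ d / 2) (by positivity)
  clear H
  have hle := Measure.withDensity_rnDeriv_le μ (volume : Measure (EuclideanSpace ℝ (Fin d)))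
  have H2 := (Measure.absolutelyContinuous_of_le hle).ae_le H1
  have H3 := (ae_withDensity_iff (Measure.measurable_rnDeriv μ volume)).1 (Filter.eventually_iff.2 H2)
  rw [← Measure.rnDeriv_eq_zero]
  have H4 := VitaliFamily.ae_tendsto_rnDeriv
    (IsUnifLocDoublingMeasure.vitaliFamily
      (volume : Measure (EuclideanSpace ℝ (Fin d))) (2 / c)) μ
  filter_upwards [H3, H4, Measure.rnDeriv_lt_top μ volume] with x h3 h4 htop
  by_contra hne
  have h5 := h3 hne
  have h6 : ∀ᶠ r in nhdsWithin (0 : ℝ) (Set.Ioi 0), ∃ y, dist x y < r ∧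
      μ (closedBall y (c / 2 * r)) ≤ ENNReal.ofReal ((c / 2) ^ d / 2) * μ (closedBall x r) := by
    filter_upwards [h5, self_mem_nhdsWithin] with r hr hr0
    have hr0 : 0 < r := hr0
    obtain ⟨y, α, hα, hsub, hμ⟩ := hr
    refine ⟨y, ?_, ?_⟩
    · have : y ∈ ball x r := hsub (mem_ball_self (mul_pos (hc.trans hα) hr0))
      rwa [mem_ball'] at this
    · refine (measure_mono (closedBall_subset_ball ?_)).trans
        (hμ.trans (by gcongr; exact ball_subset_closedBall))
      nlinarith
  obtain ⟨y, hy⟩ := h6.choice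
  have hid : Tendsto (fun r : ℝ => r) (nhdsWithin (0 : ℝ) (Set.Ioi 0))
      (nhdsWithin (0 : ℝ) (Set.Ioi 0)) := tendsto_id
  have hcr : Tendsto (fun r : ℝ => c / 2 * r) (nhdsWithin (0 : ℝ) (Set.Ioi 0))
      (nhdsWithin (0 : ℝ) (Set.Ioi 0)) := by
    rw [tendsto_nhdsWithin_iff]
    constructor
    · have : Tendsto (fun r : ℝ => c / 2 * r) (nhds 0) (nhds (c / 2 * 0)) :=
        (continuous_const.mul continuous_id).tendsto 0
      rw [mul_zero] at this
      exact this.mono_left nhdsWithin_le_nhds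
    · filter_upwards [self_mem_nhdsWithin] with r hr
      have hr : 0 < r := hr
      exact mul_pos (by positivity) hr
  have T1 := h4.comp (IsUnifLocDoublingMeasure.tendsto_closedBall_filterAt volume (K := 2 / c)
    (x := x) (fun _ : ℝ => x) (fun r => r) hid (by
      filter_upwards [self_mem_nhdsWithin] with r hr
      have hr : 0 < r := hr
      exact mem_closedBall_self (by positivity)))
  have T2 := h4.comp (IsUnifLocDoublingMeasure.tendsto_closedBall_filterAt volume (K := 2 / c)
    (x := x) y (fun r => c / 2 * r) hcr (by
      filter_upwards [hy] with r hr
      rw [mem_closedBall]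
      have : 2 / c * (c / 2 * r) = r := by field_simp
      rw [this]
      exact hr.1.le))
  have T3 := ENNReal.Tendsto.const_mul (a := ENNReal.ofReal (1 / 2)) T1
    (Or.inr ENNReal.ofReal_ne_top)
  have hfin := le_of_tendsto_of_tendsto T2 T3 (by
    filter_upwards [hy, self_mem_nhdsWithin] with r hr hr0
    have hr0 : 0 < r := hr0
    simp only [Function.comp]
    have hK : ENNReal.ofReal ((c / 2) ^ d) ≠ 0 := by simpa using hcd
    have hvol : volume (closedBall (y r) (c / 2 * r))
        = ENNReal.ofReal ((c / 2) ^ d) * volume (closedBall x r) := by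
      rw [Measure.addHaar_closedBall_mul volume (y r) (by positivity) hr0.le,
        Measure.addHaar_closedBall_center volume x]
      simp
    have hV0 : volume (closedBall x r) ≠ 0 := (measure_closedBall_pos volume x hr0).ne'
    have hVt : volume (closedBall x r) ≠ ⊤ := measure_closedBall_lt_top.ne
    rw [hvol]
    refine ENNReal.div_le_of_le_mul (hr.2.trans (le_of_eq ?_))
    have he : (c / 2) ^ d / 2 = (1 / 2) * (c / 2) ^ d := by ring
    rw [he, ENNReal.ofReal_mul (by norm_num)]
    calc _ = ENNReal.ofReal (1 / 2) * ENNReal.ofReal ((c / 2) ^ d) *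
          (μ (closedBall x r) / volume (closedBall x r) * volume (closedBall x r)) := by
          rw [ENNReal.div_mul_cancel hV0 hVt]
      _ = _ := by ring)
  lift μ.rnDeriv volume x to NNReal using htop.ne with D
  have hD : (D : ENNReal) ≠ 0 := hne
  have hD0 : 0 < (D : ℝ) := by
    have : D ≠ 0 := by simpa using hD
    positivity
  have := ENNReal.toReal_mono (by finiteness) hfin
  rw [ENNReal.toReal_mul, ENNReal.toReal_ofReal (by norm_num)] at this
  simp at this
  linarith
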